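/- Let $A = (a_{ij}) \in \mathbb{Z}^{d\times d}$ be lower triangular with positive diagonal entries, $\mathcal{P}(A)$ the simplex with vertices the rows of $A$ and the origin, and $s_{i_1\cdots i_d}$ as defined via the fractional-part recursion. Then the $\delta$-polynomial of $\mathcal{P}(A)$ equals $\delta_{\mathcal{P}(A)}(t) = \sum_{(i_1,\ldots,i_d),\, 1 \leq i_j \leq a_{jj}} t^{d+1-s_{i_1\cdots i_d}}$. -/

import Mathlib

open Set Pointwise

/-- The number of lattice points in the `n`-th dilation of `P ⊆ ℝ^N`. -/
noncomputable def ehr {N : ℕ} (P : Set (Fin N → ℝ)) (n : ℕ) : ℕ :=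
  Set.ncard {x : Fin N → ℤ | (fun i => (x i : ℝ)) ∈ (n : ℝ) • P}

/-- The `i`-th coefficient of `(1-λ)^(d+1) * (1 + ∑_{n ≥ 1} i(P,n) λ^n)`,
i.e. the `i`-th entry of the δ-vector of a `d`-dimensional integral polytope. -/
noncomputable def deltaVec {N : ℕ} (P : Set (Fin N → ℝ)) (d i : ℕ) : ℤ :=
  ∑ j ∈ Finset.range (i + 1),
    (-1 : ℤ) ^ (i - j) * (Nat.choose (d + 1) (i - j) : ℤ) * (ehr P j : ℤ)

/-- `P ⊆ ℝ^N` is an integral polytope of dimension `d`. -/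
def IsIntegralPolytope {N : ℕ} (P : Set (Fin N → ℝ)) (d : ℕ) : Prop :=
  ∃ V : Finset (Fin N → ℤ), V.Nonempty ∧
    P = convexHull ℝ ((fun v i => ((v i : ℝ))) '' (V : Set (Fin N → ℤ))) ∧
    Module.finrank ℝ (vectorSpan ℝ P) = d

/-- `lamRev d A f m` is `λ_k` (0-indexed `k = d - 1 - m`) defined by the downward
recursion `λ_k = (i_k - frac(∑_{h > k} a_{h k} λ_h)) / a_{k k}`, where `i_k = f k`. -/
noncomputable def lamRev (d : ℕ) (A : Matrix (Fin d) (Fin d) ℤ) (f : Fin d → ℕ) :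
    ℕ → ℚ
  | m =>
    if h : m < d then
      let k : Fin d := ⟨d - 1 - m, by omega⟩
      ((f k : ℚ) - Int.fract (∑ r ∈ (Finset.range m).attach,
        (A ⟨d - 1 - r.1, by omega⟩ k : ℚ) * lamRev d A f r.1)) / (A k k : ℚ)
    else 0
termination_by m => m
decreasing_by exact Finset.mem_range.mp r.2

/-- `s_{i_1 ⋯ i_d} = ⌊∑_k λ_k⌋ + 1` for the index tuple `f`. -/
noncomputable def sVal (d : ℕ) (A : Matrix (Fin d) (Fin d) ℤ) (f : Fin d → ℕ) : ℤ :=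
  ⌊∑ m ∈ Finset.range d, lamRev d A f m⌋ + 1

/-! ### The fractional-part recursion -/

/-- `λ_k` indexed by `k : Fin d` instead of by the reversed index. -/
noncomputable def lam {d : ℕ} (A : Matrix (Fin d) (Fin d) ℤ) (f : Fin d → ℕ) (k : Fin d) : ℝ :=
  (lamRev d A f (Fin.rev k) : ℚ)

lemma lamRev_rev_eq {d : ℕ} (A : Matrix (Fin d) (Fin d) ℤ) (f : Fin d → ℕ) (k : Fin d) :
    lamRev d A f (Fin.rev k) = ((f k : ℚ) - Int.fract (∑ h ∈ Finset.Ioi k,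
      (A h k : ℚ) * lamRev d A f (Fin.rev h))) / (A k k : ℚ) := by
  have hk : (⟨d - 1 - (Fin.rev k : ℕ), by omega⟩ : Fin d) = k := by
    ext; simp only [Fin.val_rev]; omega
  rw [lamRev, dif_pos (Fin.rev k).2]
  simp only [hk]
  congr 3
  refine Finset.sum_bij' (fun r _ => ⟨d - 1 - r.1, by omega⟩)
    (fun h hh => ⟨Fin.rev h, by
      simp only [Finset.mem_Ioi, Fin.lt_def, Finset.mem_range, Fin.val_rev] at hh ⊢; omega⟩)
    ?_ ?_ ?_ ?_ ?_
  · rintro ⟨r, hr⟩ -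
    simp only [Finset.mem_Ioi, Fin.lt_def, Finset.mem_range, Fin.val_rev] at hr ⊢
    omega
  · simp
  · rintro ⟨r, hr⟩ -
    simp only [Finset.mem_range, Fin.val_rev] at hr
    simp only [Fin.val_rev, Subtype.mk.injEq]
    omega
  · intro h _
    ext
    simp only [Fin.val_rev]
    omega
  · rintro ⟨r, hr⟩ -
    simp only [Finset.mem_range, Fin.val_rev] at hr
    simp only [Fin.val_rev]
    congr 2
    omega

lemma lam_eq {d : ℕ} (A : Matrix (Fin d) (Fin d) ℤ) (f : Fin d → ℕ) (k : Fin d) :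
    lam A f k = ((f k : ℝ) - Int.fract (∑ h ∈ Finset.Ioi k, (A h k : ℝ) * lam A f h))
      / (A k k : ℝ) := by
  simp only [lam]
  rw [lamRev_rev_eq A f k]
  push_cast [Rat.cast_fract]
  rfl

lemma diag_mul_lam {d : ℕ} {A : Matrix (Fin d) (Fin d) ℤ} (hdiag : ∀ i, 0 < A i i)
    (f : Fin d → ℕ) (k : Fin d) :
    (A k k : ℝ) * lam A f k + Int.fract (∑ h ∈ Finset.Ioi k, (A h k : ℝ) * lam A f h) = f k := by
  have : (A k k : ℝ) ≠ 0 := by exact_mod_cast (hdiag k).ne'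
  rw [lam_eq]
  field_simp
  ring

lemma eq_lam_of_diag_mul {d : ℕ} {A : Matrix (Fin d) (Fin d) ℤ} (hdiag : ∀ i, 0 < A i i)
    {f : Fin d → ℕ} {l : Fin d → ℝ}
    (h : ∀ k, (A k k : ℝ) * l k + Int.fract (∑ h ∈ Finset.Ioi k, (A h k : ℝ) * l h) = f k) :
    l = lam A f := by
  funext k
  induction k using WellFoundedGT.induction with
  | ind k ih =>
    have hk : (A k k : ℝ) ≠ 0 := by exact_mod_cast (hdiag k).ne'
    have hs : ∑ h ∈ Finset.Ioi k, (A h k : ℝ) * l h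
        = ∑ h ∈ Finset.Ioi k, (A h k : ℝ) * lam A f h :=
      Finset.sum_congr rfl fun j hj => by rw [ih j (Finset.mem_Ioi.mp hj)]
    have h1 := h k
    rw [hs, ← diag_mul_lam hdiag f k] at h1
    exact mul_left_cancel₀ hk (add_right_cancel h1)

lemma lam_injective {d : ℕ} {A : Matrix (Fin d) (Fin d) ℤ} (hdiag : ∀ i, 0 < A i i)
    {f g : Fin d → ℕ} (h : lam A f = lam A g) : f = g := by
  funext k
  have := diag_mul_lam hdiag f k
  rw [h, diag_mul_lam hdiag g k] at this
  exact_mod_cast this.symm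

lemma lam_pos {d : ℕ} {A : Matrix (Fin d) (Fin d) ℤ} (hdiag : ∀ i, 0 < A i i)
    {f : Fin d → ℕ} {k : Fin d} (hf : 1 ≤ f k) : 0 < lam A f k := by
  have h0 : (0 : ℝ) < A k k := by exact_mod_cast hdiag k
  have h1 : (1 : ℝ) ≤ f k := by exact_mod_cast hf
  rw [lam_eq]
  exact div_pos (by linarith [Int.fract_lt_one (∑ h ∈ Finset.Ioi k, (A h k : ℝ) * lam A f h)]) h0

lemma lam_le_one {d : ℕ} {A : Matrix (Fin d) (Fin d) ℤ} (hdiag : ∀ i, 0 < A i i)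
    {f : Fin d → ℕ} {k : Fin d} (hf : f k ≤ (A k k).toNat) : lam A f k ≤ 1 := by
  have h0 : (0 : ℝ) < A k k := by exact_mod_cast hdiag k
  have h1 : (f k : ℝ) ≤ A k k := by
    have : (f k : ℤ) ≤ A k k := by have := hdiag k; omega
    exact_mod_cast this
  rw [lam_eq, div_le_one h0]
  linarith [Int.fract_nonneg (∑ h ∈ Finset.Ioi k, (A h k : ℝ) * lam A f h)]

lemma sVal_eq_floor_sum_lam {d : ℕ} (A : Matrix (Fin d) (Fin d) ℤ) (f : Fin d → ℕ) :
    sVal d A f = ⌊∑ k, lam A f k⌋ + 1 := by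
  have h : ∑ k, lam A f k = ((∑ m ∈ Finset.range d, lamRev d A f m : ℚ) : ℝ) := by
    rw [Finset.sum_range, ← Equiv.sum_comp Fin.revPerm]
    simp [lam]
  rw [sVal, h, Rat.floor_cast]

/-! ### Lower triangular matrices -/

lemma sum_mul_of_lower {d : ℕ} {A : Matrix (Fin d) (Fin d) ℤ}
    (hlow : ∀ i j, i < j → A i j = 0) (c : Fin d → ℝ) (j : Fin d) :
    ∑ k, c k * (A k j : ℝ) = A j j * c j + ∑ h ∈ Finset.Ioi j, (A h j : ℝ) * c h := by
  have h1 : ∑ k, c k * (A k j : ℝ) = ∑ k ∈ Finset.Ici j, c k * (A k j : ℝ) := by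
    refine (Finset.sum_subset (Finset.subset_univ _) fun k _ hk => ?_).symm
    rw [hlow k j (by simpa using hk)]
    simp
  rw [h1, ← Finset.Ioi_insert, Finset.sum_insert (by simp)]
  simp only [mul_comm]

lemma eq_of_sum_mul_eq {d : ℕ} {A : Matrix (Fin d) (Fin d) ℤ}
    (hlow : ∀ i j, i < j → A i j = 0) (hdiag : ∀ i, 0 < A i i) {b c : Fin d → ℝ}
    (h : ∀ j, ∑ k, b k * (A k j : ℝ) = ∑ k, c k * (A k j : ℝ)) : b = c := by
  funext k
  induction k using WellFoundedGT.induction with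
  | ind k ih =>
    have hk : (A k k : ℝ) ≠ 0 := by exact_mod_cast (hdiag k).ne'
    have hs : ∑ h ∈ Finset.Ioi k, (A h k : ℝ) * b h = ∑ h ∈ Finset.Ioi k, (A h k : ℝ) * c h :=
      Finset.sum_congr rfl fun j hj => by rw [ih j (Finset.mem_Ioi.mp hj)]
    have h1 := h k
    rw [sum_mul_of_lower hlow, sum_mul_of_lower hlow, hs] at h1
    exact mul_left_cancel₀ hk (add_right_cancel h1)

lemma exists_int_eq_sum_lam_mul {d : ℕ} {A : Matrix (Fin d) (Fin d) ℤ}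
    (hlow : ∀ i j, i < j → A i j = 0) (hdiag : ∀ i, 0 < A i i) (f : Fin d → ℕ) (j : Fin d) :
    ∃ z : ℤ, (z : ℝ) = ∑ k, lam A f k * (A k j : ℝ) := by
  refine ⟨f j + ⌊∑ h ∈ Finset.Ioi j, (A h j : ℝ) * lam A f h⌋, ?_⟩
  rw [sum_mul_of_lower hlow]
  push_cast
  rw [← diag_mul_lam hdiag f j]
  linarith [Int.fract_add_floor (∑ h ∈ Finset.Ioi j, (A h j : ℝ) * lam A f h)]

lemma exists_lam_eq {d : ℕ} {A : Matrix (Fin d) (Fin d) ℤ}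
    (hlow : ∀ i j, i < j → A i j = 0) (hdiag : ∀ i, 0 < A i i) {l : Fin d → ℝ}
    (hpos : ∀ k, 0 < l k) (hle : ∀ k, l k ≤ 1)
    (hinteg : ∀ j, ∃ z : ℤ, (z : ℝ) = ∑ k, l k * (A k j : ℝ)) :
    ∃ f ∈ Fintype.piFinset (fun j : Fin d => Finset.Icc 1 (A j j).toNat), l = lam A f := by
  choose z hz using hinteg
  set S : Fin d → ℝ := fun k => ∑ h ∈ Finset.Ioi k, (A h k : ℝ) * l h
  have hw (k : Fin d) : (A k k : ℝ) * l k + Int.fract (S k) = ((z k - ⌊S k⌋ : ℤ) : ℝ) := by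
    push_cast
    rw [hz, sum_mul_of_lower hlow]
    change _ = (A k k : ℝ) * l k + S k - ⌊S k⌋
    linarith [Int.fract_add_floor (S k)]
  have hA (k : Fin d) : (0 : ℝ) < A k k := by exact_mod_cast hdiag k
  have hw1 (k : Fin d) : 0 < z k - ⌊S k⌋ := by
    have : (0 : ℝ) < ((z k - ⌊S k⌋ : ℤ) : ℝ) := by
      rw [← hw]
      have := mul_pos (hA k) (hpos k)
      linarith [Int.fract_nonneg (S k)]
    exact_mod_cast this
  have hw2 (k : Fin d) : z k - ⌊S k⌋ < A k k + 1 := by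
    have : ((z k - ⌊S k⌋ : ℤ) : ℝ) < ((A k k + 1 : ℤ) : ℝ) := by
      rw [← hw]
      have := mul_le_of_le_one_right (hA k).le (hle k)
      push_cast
      linarith [Int.fract_lt_one (S k)]
    exact_mod_cast this
  refine ⟨fun k => (z k - ⌊S k⌋).toNat, ?_, eq_lam_of_diag_mul hdiag fun k => ?_⟩
  · simp only [Fintype.mem_piFinset, Finset.mem_Icc]
    intro k
    have := hw1 k
    have := hw2 k
    omega
  · have h : (((z k - ⌊S k⌋).toNat : ℤ) : ℝ) = ((z k - ⌊S k⌋ : ℤ) : ℝ) := by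
      rw [Int.toNat_of_nonneg (hw1 k).le]
    rw [← Int.cast_natCast (R := ℝ), h]
    exact hw k

/-! ### Lattice points in dilations of a simplex -/

lemma convexHull_insert_zero_range {ι E : Type*} [Fintype ι] [AddCommGroup E] [Module ℝ E]
    (v : ι → E) :
    convexHull ℝ (insert 0 (Set.range v))
      = {x | ∃ c : ι → ℝ, (∀ k, 0 ≤ c k) ∧ ∑ k, c k ≤ 1 ∧ x = ∑ k, c k • v k} := by
  classical
  apply Set.Subset.antisymm
  · refine convexHull_min (Set.insert_subset ⟨0, by simp⟩ ?_) ?_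
    · rintro _ ⟨k, rfl⟩
      refine ⟨Pi.single k 1, fun j => ?_, by simp, by simp [Pi.single_apply]⟩
      rw [Pi.single_apply]
      split_ifs <;> simp
    · rintro _ ⟨b, hb, hb1, rfl⟩ _ ⟨c, hc, hc1, rfl⟩ s t hs ht hst
      refine ⟨s • b + t • c, fun k => ?_, ?_, ?_⟩
      · exact add_nonneg (mul_nonneg hs (hb k)) (mul_nonneg ht (hc k))
      · simp only [Pi.add_apply, Pi.smul_apply, smul_eq_mul, Finset.sum_add_distrib,
          ← Finset.mul_sum]
        nlinarith
      · simp [Finset.smul_sum, add_smul, Finset.sum_add_distrib, mul_smul]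
  · rintro _ ⟨c, hc, hc1, rfl⟩
    have h := (convex_convexHull ℝ (insert 0 (Set.range v))).sum_mem
      (t := Finset.univ) (w := fun o : Option ι => o.elim (1 - ∑ k, c k) c)
      (z := fun o : Option ι => o.elim 0 v) ?_ ?_ ?_
    · simpa [Fintype.sum_option] using h
    · rintro (_ | k) -
      · simpa using hc1
      · exact hc k
    · simp [Fintype.sum_option]
    · rintro (_ | k) -
      · exact subset_convexHull _ _ (Set.mem_insert _ _)
      · exact subset_convexHull _ _ (Set.mem_insert_of_mem _ ⟨k, rfl⟩)

lemma mem_smul_convexHull_insert_zero_range {ι E : Type*} [Fintype ι] [AddCommGroup E]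
    [Module ℝ E] (v : ι → E) {r : ℝ} (hr : 0 ≤ r) (x : E) :
    x ∈ r • convexHull ℝ (insert 0 (Set.range v))
      ↔ ∃ c : ι → ℝ, (∀ k, 0 ≤ c k) ∧ ∑ k, c k ≤ r ∧ x = ∑ k, c k • v k := by
  rw [convexHull_insert_zero_range, Set.mem_smul_set]
  constructor
  · rintro ⟨_, ⟨c, hc, hc1, rfl⟩, rfl⟩
    refine ⟨r • c, fun k => mul_nonneg hr (hc k), ?_, ?_⟩
    · simp only [Pi.smul_apply, smul_eq_mul, ← Finset.mul_sum]
      exact mul_le_of_le_one_right hr hc1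
    · simp [Finset.smul_sum, mul_smul]
  · rintro ⟨c, hc, hc1, rfl⟩
    rcases hr.eq_or_lt with rfl | hr
    · have h0 : ∀ k, c k = 0 := fun k =>
        le_antisymm ((Finset.single_le_sum (fun j _ => hc j) (Finset.mem_univ k)).trans hc1) (hc k)
      exact ⟨0, ⟨0, by simp⟩, by simp [h0]⟩
    · refine ⟨_, ⟨r⁻¹ • c, fun k => mul_nonneg (inv_nonneg.2 hr.le) (hc k), ?_, rfl⟩, ?_⟩
      · simp only [Pi.smul_apply, smul_eq_mul, ← Finset.mul_sum]
        rw [inv_mul_le_iff₀ hr]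
        simpa using hc1
      · simp [Finset.smul_sum, smul_smul, hr.ne']

/-- The exponent `d + 1 - s` attached to an index tuple. -/
noncomputable def height {d : ℕ} (A : Matrix (Fin d) (Fin d) ℤ) (f : Fin d → ℕ) : ℕ :=
  ((d : ℤ) + 1 - sVal d A f).toNat

lemma height_cast {d : ℕ} {A : Matrix (Fin d) (Fin d) ℤ} {f : Fin d → ℕ}
    (hle : ∀ k, lam A f k ≤ 1) : (height A f : ℤ) = ⌈∑ k, (1 - lam A f k)⌉ := by
  have h : ∑ k, (1 - lam A f k) = (d : ℤ) - ∑ k, lam A f k := by simp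
  have h0 : 0 ≤ ⌈∑ k, (1 - lam A f k)⌉ :=
    Int.ceil_nonneg (Finset.sum_nonneg fun k _ => sub_nonneg.2 (hle k))
  rw [h, sub_eq_add_neg, Int.ceil_intCast_add, Int.ceil_neg] at *
  rw [height, sVal_eq_floor_sum_lam]
  omega

lemma height_le {d : ℕ} {A : Matrix (Fin d) (Fin d) ℤ} {f : Fin d → ℕ}
    (h : ∀ k, 0 ≤ lam A f k) : height A f ≤ d := by
  have := Int.floor_nonneg.2 (Finset.sum_nonneg fun k (_ : k ∈ Finset.univ) => h k)
  rw [height, sVal_eq_floor_sum_lam]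
  omega

/-- Index tuples together with the integral parts of the barycentric coordinates of a lattice
point of the `n`-th dilation. -/
noncomputable def latticeCodes {d : ℕ} (A : Matrix (Fin d) (Fin d) ℤ) (n : ℕ) :
    Finset (Σ _ : Fin d → ℕ, Fin (d + 1) →₀ ℕ) :=
  (Fintype.piFinset fun j : Fin d => Finset.Icc 1 (A j j).toNat).sigma fun f =>
    if height A f ≤ n then Finset.univ.finsuppAntidiag (n - height A f) else ∅

/-- The barycentric coordinates of the lattice point with code `p`. -/
noncomputable def coords {d : ℕ} (A : Matrix (Fin d) (Fin d) ℤ)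
    (p : Σ _ : Fin d → ℕ, Fin (d + 1) →₀ ℕ) (k : Fin d) : ℝ :=
  p.2 k.succ + (1 - lam A p.1 k)

lemma mem_latticeCodes {d : ℕ} {A : Matrix (Fin d) (Fin d) ℤ} {n : ℕ}
    {p : Σ _ : Fin d → ℕ, Fin (d + 1) →₀ ℕ} :
    p ∈ latticeCodes A n ↔ (∀ k, p.1 k ∈ Finset.Icc 1 (A k k).toNat) ∧
      p.2 0 + ∑ k : Fin d, p.2 k.succ + height A p.1 = n := by
  rw [latticeCodes, Finset.mem_sigma, Fintype.mem_piFinset, ← Fin.sum_univ_succ]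
  split_ifs with h
  · simp only [Finset.mem_finsuppAntidiag, Finset.subset_univ, and_true]
    refine and_congr_right fun _ => ?_
    change ∑ i, p.2 i = _ ↔ _
    omega
  · simp only [Finset.notMem_empty, and_false, false_iff, not_and]
    intro _ _
    omega

lemma ehr_eq_card_latticeCodes {d : ℕ} {A : Matrix (Fin d) (Fin d) ℤ}
    (hlow : ∀ i j, i < j → A i j = 0) (hdiag : ∀ i, 0 < A i i) (n : ℕ) :
    ehr (convexHull ℝ (insert (0 : Fin d → ℝ) (Set.range fun i j => (A i j : ℝ)))) n
      = (latticeCodes A n).card := by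
  have hinteg (p : Σ _ : Fin d → ℕ, Fin (d + 1) →₀ ℕ) (j : Fin d) :
      ∃ z : ℤ, (z : ℝ) = ∑ k, coords A p k * (A k j : ℝ) := by
    obtain ⟨z, hz⟩ := exists_int_eq_sum_lam_mul hlow hdiag p.1 j
    refine ⟨∑ k, ((p.2 k.succ : ℤ) + 1) * A k j - z, ?_⟩
    push_cast
    rw [hz, ← Finset.sum_sub_distrib]
    exact Finset.sum_congr rfl fun k _ => by rw [coords]; ring
  choose F hF using hinteg
  rw [ehr, ← Set.ncard_coe_finset]
  symm
  refine Set.ncard_congr (fun p _ => F p) ?_ ?_ ?_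
  · intro p hp
    obtain ⟨hf, hs⟩ := mem_latticeCodes.1 (Finset.mem_coe.1 hp)
    have hle (k : Fin d) : lam A p.1 k ≤ 1 := lam_le_one hdiag (Finset.mem_Icc.1 (hf k)).2
    rw [Set.mem_ofPred_eq, mem_smul_convexHull_insert_zero_range _ n.cast_nonneg]
    refine ⟨coords A p, fun k => ?_, ?_, ?_⟩
    · exact add_nonneg (Nat.cast_nonneg _) (sub_nonneg.2 (hle k))
    · have h1 : ∑ k, (1 - lam A p.1 k) ≤ height A p.1 := by
        rw [← Int.cast_natCast, height_cast hle]
        exact Int.le_ceil _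
      have h2 : (p.2 0 : ℝ) + ∑ k : Fin d, (p.2 k.succ : ℝ) + height A p.1 = n := by
        exact_mod_cast hs
      have h3 : (0 : ℝ) ≤ p.2 0 := Nat.cast_nonneg _
      simp only [coords, Finset.sum_add_distrib]
      linarith
    · funext j
      simp [hF]
  · intro p q hp hq hpq
    obtain ⟨hf, hs⟩ := mem_latticeCodes.1 (Finset.mem_coe.1 hp)
    obtain ⟨hg, ht⟩ := mem_latticeCodes.1 (Finset.mem_coe.1 hq)
    have hc : coords A p = coords A q := eq_of_sum_mul_eq hlow hdiag fun j => by
      rw [← hF, ← hF, hpq]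
    have hfloor (r : Σ _ : Fin d → ℕ, Fin (d + 1) →₀ ℕ)
        (hr : ∀ k, r.1 k ∈ Finset.Icc 1 (A k k).toNat) (k : Fin d) :
        ⌊coords A r k⌋ = (r.2 k.succ : ℤ) := by
      rw [Int.floor_eq_iff, coords]
      have h1 := lam_pos hdiag (Finset.mem_Icc.1 (hr k)).1
      have h2 := lam_le_one hdiag (Finset.mem_Icc.1 (hr k)).2
      push_cast
      constructor <;> linarith
    have hm (k : Fin d) : p.2 k.succ = q.2 k.succ := by
      have := hfloor p hf k
      rw [hc, hfloor q hg k] at this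
      exact_mod_cast this.symm
    have hfg : p.1 = q.1 := lam_injective hdiag <| funext fun k => by
      have := congrFun hc k
      simp only [coords, hm] at this
      linarith
    have h0 : p.2 0 = q.2 0 := by
      simp only [hm, hfg] at hs
      omega
    refine Sigma.ext hfg (heq_of_eq (Finsupp.ext fun k => ?_))
    exact Fin.cases h0 hm k
  · intro x hx
    rw [Set.mem_ofPred_eq, mem_smul_convexHull_insert_zero_range _ n.cast_nonneg] at hx
    obtain ⟨c, hc, hcn, hxc⟩ := hx
    have hxj (j : Fin d) : (x j : ℝ) = ∑ k, c k * (A k j : ℝ) := by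
      simpa using congrFun hxc j
    obtain ⟨f, hf, hl⟩ := exists_lam_eq hlow hdiag (l := fun k => 1 - Int.fract (c k))
      (fun k => sub_pos.2 (Int.fract_lt_one _))
      (fun k => sub_le_self _ (Int.fract_nonneg _)) fun j => by
        refine ⟨∑ k, (1 + ⌊c k⌋) * A k j - x j, ?_⟩
        push_cast
        rw [hxj, ← Finset.sum_sub_distrib]
        exact Finset.sum_congr rfl fun k _ => by rw [← Int.self_sub_floor]; ring
    rw [Fintype.mem_piFinset] at hf
    have hle (k : Fin d) : lam A f k ≤ 1 := lam_le_one hdiag (Finset.mem_Icc.1 (hf k)).2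
    have hcast (k : Fin d) : ((⌊c k⌋.toNat : ℤ) : ℝ) = ⌊c k⌋ := by
      rw [Int.toNat_of_nonneg (Int.floor_nonneg.2 (hc k))]
    have hsum : ∑ k, ⌊c k⌋.toNat + height A f ≤ n := by
      have h1 : (height A f : ℤ) ≤ n - ∑ k, (⌊c k⌋.toNat : ℤ) := by
        rw [height_cast hle, Int.ceil_le, ← hl]
        push_cast [hcast]
        have : ∑ k, c k = ∑ k, (⌊c k⌋ : ℝ) + ∑ k, (1 - (1 - Int.fract (c k))) := by
          rw [← Finset.sum_add_distrib]
          exact Finset.sum_congr rfl fun k _ => by linarith [Int.fract_add_floor (c k)]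
        linarith
      zify
      linarith
    let p : Σ _ : Fin d → ℕ, Fin (d + 1) →₀ ℕ := ⟨f, Finsupp.equivFunOnFinite.symm
      (Fin.cons (n - (∑ k, ⌊c k⌋.toNat + height A f)) fun k => ⌊c k⌋.toNat)⟩
    have hp : coords A p = c := by
      funext k
      have hk := hcast k
      have h2 := congrFun hl k
      simp only [Int.cast_natCast] at hk
      simp only [coords, p, Finsupp.coe_equivFunOnFinite_symm, Fin.cons_succ, hk, ← h2]
      linarith [Int.fract_add_floor (c k)]
    refine ⟨p, Finset.mem_coe.2 (mem_latticeCodes.2 ⟨hf, ?_⟩), funext fun j => ?_⟩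
    · simp only [p, Finsupp.coe_equivFunOnFinite_symm, Fin.cons_succ, Fin.cons_zero]
      omega
    · have := hF p j
      rw [hp, ← hxj] at this
      exact_mod_cast this

/-! ### Generating functions -/

lemma PowerSeries.coeff_mk_one_pow {R : Type*} [CommRing R] (d n : ℕ) :
    (PowerSeries.coeff n) ((PowerSeries.mk 1 : PowerSeries R) ^ d)
      = ((Finset.univ : Finset (Fin d)).finsuppAntidiag n).card := by
  have h := PowerSeries.coeff_prod (fun _ : Fin d => (PowerSeries.mk 1 : PowerSeries R)) n
    Finset.univ
  simpa using h

lemma PowerSeries.coeff_one_sub_X_pow {R : Type*} [CommRing R] (d n : ℕ) :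
    (PowerSeries.coeff n) ((1 - PowerSeries.X : PowerSeries R) ^ d)
      = (-1) ^ n * (d.choose n : R) := by
  have h : (1 - PowerSeries.X : PowerSeries R) ^ d
      = (((1 + Polynomial.X : Polynomial R) ^ d).comp (Polynomial.C (-1) * Polynomial.X) :
        Polynomial R) := by
    simp [sub_eq_add_neg]
  rw [h, Polynomial.coeff_coe, Polynomial.comp_C_mul_X_coeff, Polynomial.coeff_one_add_X_pow,
    mul_comm]

lemma deltaVec_eq_coeff {N : ℕ} (P : Set (Fin N → ℝ)) (d i : ℕ) :
    deltaVec P d i = PowerSeries.coeff i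
      (PowerSeries.mk (fun n => (ehr P n : ℤ)) * (1 - PowerSeries.X) ^ (d + 1)) := by
  rw [PowerSeries.coeff_mul, Finset.Nat.sum_antidiagonal_eq_sum_range_succ
    (fun a b => PowerSeries.coeff a (PowerSeries.mk fun n => (ehr P n : ℤ)) *
      PowerSeries.coeff b ((1 - PowerSeries.X : PowerSeries ℤ) ^ (d + 1)))]
  simp only [deltaVec, PowerSeries.coeff_mk, PowerSeries.coeff_one_sub_X_pow]
  exact Finset.sum_congr rfl fun j _ => mul_comm _ _

lemma mk_card_latticeCodes {d : ℕ} (A : Matrix (Fin d) (Fin d) ℤ) :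
    PowerSeries.mk (fun n => ((latticeCodes A n).card : ℤ))
      = (∑ f ∈ Fintype.piFinset (fun j : Fin d => Finset.Icc 1 (A j j).toNat),
          PowerSeries.X ^ height A f) * PowerSeries.mk 1 ^ (d + 1) := by
  ext n
  rw [PowerSeries.coeff_mk, Finset.sum_mul, map_sum, latticeCodes, Finset.card_sigma]
  push_cast
  refine Finset.sum_congr rfl fun f _ => ?_
  rw [PowerSeries.coeff_X_pow_mul']
  split_ifs
  · rw [PowerSeries.coeff_mk_one_pow]
  · simp

theorem stmt4 (d : ℕ) (A : Matrix (Fin d) (Fin d) ℤ)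
    (hlow : ∀ i j, i < j → A i j = 0) (hdiag : ∀ i, 0 < A i i)
    (P : Set (Fin d → ℝ))
    (hP : P = convexHull ℝ
      (insert (0 : Fin d → ℝ) (Set.range fun i j => (A i j : ℝ)))) :
    ∑ i ∈ Finset.range (d + 1), Polynomial.C (deltaVec P d i) * Polynomial.X ^ i
    = ∑ f ∈ Fintype.piFinset (fun j : Fin d => Finset.Icc 1 (A j j).toNat),
        (Polynomial.X : Polynomial ℤ) ^ ((d : ℤ) + 1 - sVal d A f).toNat := by
  have hmk : PowerSeries.mk (fun n => (ehr P n : ℤ)) * (1 - PowerSeries.X) ^ (d + 1)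
      = ∑ f ∈ Fintype.piFinset (fun j : Fin d => Finset.Icc 1 (A j j).toNat),
          PowerSeries.X ^ height A f := by
    simp only [hP, ehr_eq_card_latticeCodes hlow hdiag]
    rw [mk_card_latticeCodes, mul_assoc, ← mul_pow, PowerSeries.mk_one_mul_one_sub_eq_one,
      one_pow, mul_one]
  change _ = ∑ f ∈ _, Polynomial.X ^ height A f
  ext i
  simp only [Polynomial.finsetSum_coeff, Polynomial.coeff_C_mul, Polynomial.coeff_X_pow, mul_ite,
    mul_one, mul_zero, Finset.sum_ite_eq, Finset.mem_range, deltaVec_eq_coeff, hmk]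
  simp only [map_sum, PowerSeries.coeff_X_pow]
  split_ifs with hi
  · rfl
  · refine (Finset.sum_eq_zero fun f hf => if_neg ?_).symm
    rw [Fintype.mem_piFinset] at hf
    have := height_le (A := A) fun k => (lam_pos hdiag (Finset.mem_Icc.1 (hf k)).1).le
    omega
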